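/- Let A ⪰ 0 and B ≻ 0 be symmetric matrices, and let P be the orthogonal projection onto ker A. For all sufficiently small t > 0, A + tB is invertible and ‖(A + tB)^{-1} - (1/t)(P B P)†‖₂ ≤ (1/λ_min⁺(A)) · (1 + λ_max(B)/λ_min(B))², where λ_min⁺(A) is the smallest nonzero eigenvalue of A (if A ≠ 0) and (PBP)† is the Moore–Penrose pseudoinverse. -/

import Mathlib

open Matrix

/-- The ℓ₂ operator (spectral) norm of a real square matrix. -/
noncomputable def specNorm5 {n : ℕ} (M : Matrix (Fin n) (Fin n) ℝ) : ℝ :=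
  ‖Matrix.toEuclideanCLM (𝕜 := ℝ) M‖

theorem aux_inner_symm {n : ℕ} {A : Matrix (Fin n) (Fin n) ℝ} (hA : A.IsHermitian)
    (x y : EuclideanSpace ℝ (Fin n)) :
    inner ℝ (Matrix.toEuclideanCLM (𝕜 := ℝ) A x) y
      = inner ℝ x (Matrix.toEuclideanCLM (𝕜 := ℝ) A y) := by
  have h : star (Matrix.toEuclideanCLM (𝕜 := ℝ) A) = Matrix.toEuclideanCLM (𝕜 := ℝ) A := by
    rw [← map_star]
    congr 1
  rw [← ContinuousLinearMap.adjoint_inner_right, ← ContinuousLinearMap.star_eq_adjoint, h]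

theorem aux_eig {n : ℕ} {A : Matrix (Fin n) (Fin n) ℝ} (hA : A.IsHermitian) (i : Fin n) :
    Matrix.toEuclideanCLM (𝕜 := ℝ) A (hA.eigenvectorBasis i)
      = hA.eigenvalues i • hA.eigenvectorBasis i := by
  have h := hA.mulVec_eigenvectorBasis i
  ext j
  simpa using congrFun h j

theorem aux_coef {n : ℕ} {A : Matrix (Fin n) (Fin n) ℝ} (hA : A.IsHermitian) (i : Fin n)
    (w : EuclideanSpace ℝ (Fin n)) :
    inner ℝ (hA.eigenvectorBasis i) (Matrix.toEuclideanCLM (𝕜 := ℝ) A w)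
      = hA.eigenvalues i * inner ℝ (hA.eigenvectorBasis i) w := by
  rw [← aux_inner_symm hA, aux_eig, real_inner_smul_left]

theorem aux_normsq {n : ℕ} {A : Matrix (Fin n) (Fin n) ℝ} (hA : A.IsHermitian)
    (w : EuclideanSpace ℝ (Fin n)) :
    ‖w‖ ^ 2 = ∑ i, (inner ℝ (hA.eigenvectorBasis i) w) ^ 2 := by
  rw [← hA.eigenvectorBasis.sum_sq_norm_inner_right w]
  simp

theorem aux_quad {n : ℕ} {A : Matrix (Fin n) (Fin n) ℝ} (hA : A.IsHermitian)
    (w : EuclideanSpace ℝ (Fin n)) :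
    inner ℝ w (Matrix.toEuclideanCLM (𝕜 := ℝ) A w)
      = ∑ i, hA.eigenvalues i * (inner ℝ (hA.eigenvectorBasis i) w) ^ 2 := by
  rw [← hA.eigenvectorBasis.sum_inner_mul_inner w]
  refine Finset.sum_congr rfl fun i _ => ?_
  rw [aux_coef, real_inner_comm]
  ring

theorem aux_alg {n : ℕ} (B P M : Matrix (Fin n) (Fin n) ℝ) (hB : B.PosDef)
    (hP_idem : P * P = P) (hP_sym : P.IsSymm)
    (hM1 : P * B * P * M * (P * B * P) = P * B * P)
    (hM2 : M * (P * B * P) * M = M)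
    (hM3 : (P * B * P * M).IsSymm)
    (hM4 : (M * (P * B * P)).IsSymm) :
    P * M = M ∧ M * P = M ∧ P * B * P * M = P ∧ M * (P * B * P) = P := by
  have hBs : Bᵀ = B := by simpa using hB.1.eq
  have hPs : Pᵀ = P := hP_sym
  obtain ⟨C, hC⟩ : ∃ C, C = P * B * P := ⟨_, rfl⟩
  have hPC : P * C = C := by rw [hC, ← mul_assoc, ← mul_assoc, hP_idem]
  have hCP : C * P = C := by rw [hC, mul_assoc, hP_idem]
  have hCs : Cᵀ = C := by
    rw [hC]; simp [Matrix.transpose_mul, hBs, hPs, mul_assoc]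
  rw [← hC] at hM1 hM2 hM3 hM4 ⊢
  have h3 : Mᵀ * C = C * M := by
    have := hM3.eq; rwa [Matrix.transpose_mul, hCs] at this
  have h4 : C * Mᵀ = M * C := by
    have := hM4.eq; rwa [Matrix.transpose_mul, hCs] at this
  have hPM : P * M = M := by
    rw [← hM2, ← h4, ← mul_assoc, ← mul_assoc, hPC]
  have hMP : M * P = M := by
    have : C * M * P = C * M := by rw [← h3, mul_assoc, hCP]
    calc M * P = M * C * M * P := by rw [hM2]
      _ = M * (C * M * P) := by simp only [mul_assoc]
      _ = M * C * M := by rw [this, mul_assoc]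
      _ = M := hM2
  have inj : ∀ X : Matrix (Fin n) (Fin n) ℝ, P * X = X → C * X = 0 → X = 0 := by
    intro X hX hCX
    have h0 : Xᴴ * B * X = 0 := by
      have e : Xᴴ * B * X = Xᵀ * (C * X) := by
        conv_lhs => rw [← hX]
        rw [Matrix.conjTranspose_eq_transpose_of_trivial, Matrix.transpose_mul, hPs, hC]
        simp only [mul_assoc]
      rw [e, hCX, mul_zero]
    ext i j
    by_contra hne
    have hv : X *ᵥ (Pi.single j 1) ≠ 0 := by
      intro h
      apply hne
      have := congrFun h i
      simpa using this
    have := hB.dotProduct_mulVec_pos hv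
    have e2 : star (X *ᵥ (Pi.single j 1)) ⬝ᵥ B *ᵥ (X *ᵥ (Pi.single j 1))
        = star (Pi.single j (1:ℝ)) ⬝ᵥ (Xᴴ * B * X) *ᵥ (Pi.single j 1) := by
      rw [Matrix.star_mulVec, ← Matrix.dotProduct_mulVec]
      rw [Matrix.mulVec_mulVec, Matrix.mulVec_mulVec, mul_assoc]
    rw [e2, h0] at this
    simp at this
  have hMC : M * C = P := by
    have := inj (M * C - P) (by rw [mul_sub, ← mul_assoc, hPM, hP_idem])
      (by rw [mul_sub, ← mul_assoc, hM1, hCP, sub_self])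
    exact sub_eq_zero.mp this
  have hCM : C * M = P := by
    have h5 : C * Mᵀ = P := by rw [h4, hMC]
    have h6 : C * M * C = C := hM1
    calc C * M = C * M * P := by rw [mul_assoc, hMP]
      _ = C * M * C * Mᵀ := by rw [← h5]; simp only [mul_assoc]
      _ = P := by rw [h6, h5]
  exact ⟨hPM, hMP, hCM, hMC⟩

/-- Expansion of `(A + tB)⁻¹` for `A ⪰ 0`, `B ≻ 0`: for every `t > 0` the
matrix `A + tB` is invertible and
`‖(A + tB)⁻¹ - (1/t) (P B P)†‖₂ ≤ (1/λ⁺min(A)) (1 + λmax(B)/λmin(B))²`,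
where `P` is the orthogonal projection onto `ker A`, `(P B P)†` is the
Moore–Penrose pseudoinverse (characterized by the Penrose conditions),
`λ⁺min(A)` is the smallest nonzero eigenvalue of `A ≠ 0`, and
`λmin(B), λmax(B)` are the extreme eigenvalues of `B`. -/
theorem inverse_expansion_psd_perturbation (n : ℕ)
    (A B : Matrix (Fin n) (Fin n) ℝ)
    (hA : A.PosSemidef) (hB : B.PosDef) (hA0 : A ≠ 0)
    (P : Matrix (Fin n) (Fin n) ℝ)
    (hP_idem : P * P = P) (hP_sym : P.IsSymm)
    (hP_ker : ∀ v : Fin n → ℝ, A.mulVec (P.mulVec v) = 0)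
    (hP_ker' : ∀ v : Fin n → ℝ, A.mulVec v = 0 → P.mulVec v = v)
    (M : Matrix (Fin n) (Fin n) ℝ)
    (hM1 : P * B * P * M * (P * B * P) = P * B * P)
    (hM2 : M * (P * B * P) * M = M)
    (hM3 : (P * B * P * M).IsSymm)
    (hM4 : (M * (P * B * P)).IsSymm)
    (α β Λ : ℝ)
    (hα_pos : 0 < α)
    (hα_eig : ∃ i, hA.1.eigenvalues i = α)
    (hα_min : ∀ i, hA.1.eigenvalues i ≠ 0 → α ≤ hA.1.eigenvalues i)
    (hβ_eig : ∃ i, hB.1.eigenvalues i = β)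
    (hβ_min : ∀ i, β ≤ hB.1.eigenvalues i)
    (hΛ_eig : ∃ i, hB.1.eigenvalues i = Λ)
    (hΛ_max : ∀ i, hB.1.eigenvalues i ≤ Λ) :
    ∃ t₀ : ℝ, 0 < t₀ ∧ ∀ t : ℝ, 0 < t → t < t₀ →
      IsUnit (A + t • B) ∧
      specNorm5 ((A + t • B)⁻¹ - t⁻¹ • M) ≤ (1 / α) * (1 + Λ / β) ^ 2 := by
  obtain ⟨hPM, hMP, hCM, hMC⟩ := aux_alg B P M hB hP_idem hP_sym hM1 hM2 hM3 hM4
  have hβ : 0 < β := by obtain ⟨i, hi⟩ := hβ_eig; rw [← hi]; exact hB.eigenvalues_pos i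
  have hΛ : 0 < Λ := by obtain ⟨i, hi⟩ := hΛ_eig; rw [← hi]; exact hB.eigenvalues_pos i
  have hPh : P.IsHermitian := by
    rw [Matrix.IsHermitian, Matrix.conjTranspose_eq_transpose_of_trivial]; exact hP_sym
  have hAP : A * P = 0 := by
    apply Matrix.ext_of_mulVec_single
    intro i
    rw [← Matrix.mulVec_mulVec, hP_ker, Matrix.zero_mulVec]
  have hPA : P * A = 0 := by
    have := congrArg Matrix.conjTranspose hAP
    rwa [Matrix.conjTranspose_mul, hPh.eq, hA.1.eq, Matrix.conjTranspose_zero] at this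
  refine ⟨1, one_pos, fun t ht _ => ?_⟩
  have hpd : (A + t • B).PosDef := Matrix.PosDef.posSemidef_add hA (hB.smul ht)
  have hunit : IsUnit (A + t • B) := hpd.isUnit
  refine ⟨hunit, ?_⟩
  have hdet : IsUnit (A + t • B).det := (Matrix.isUnit_iff_isUnit_det _).mp hunit
  obtain ⟨N, hN⟩ : ∃ N, N = (A + t • B)⁻¹ - t⁻¹ • M := ⟨_, rfl⟩
  have hAM : A * M = 0 := by rw [← hPM, ← mul_assoc, hAP, zero_mul]
  have hSN : (A + t • B) * N = 1 - B * M := by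
    rw [hN, mul_sub, Matrix.mul_nonsing_inv _ hdet, Matrix.mul_smul, add_mul, hAM, zero_add,
      Matrix.smul_mul, smul_smul, inv_mul_cancel₀ ht.ne', one_smul]
  have hPBM : P * B * M = P := by
    conv_lhs => rw [← hPM]
    rw [← mul_assoc, hCM]
  have hMBP : M * B * P = P := by
    calc M * B * P = M * P * B * P := by rw [hMP]
      _ = M * (P * B * P) := by simp only [mul_assoc]
      _ = P := hMC
  have hPBN : P * B * N = 0 := by
    have h1 : P * ((A + t • B) * N) = t • (P * B * N) := by
      rw [← mul_assoc, mul_add, hPA, zero_add, Matrix.mul_smul, Matrix.smul_mul]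
    rw [hSN, mul_sub, mul_one, ← mul_assoc, hPBM, sub_self] at h1
    exact (smul_eq_zero.mp h1.symm).resolve_left ht.ne'
  have hMBN : M * B * N = 0 := by
    rw [← hMP]
    have : M * P * B * N = M * (P * B * N) := by simp only [mul_assoc]
    rw [this, hPBN, mul_zero]
  have hNQ : N = (1 - M * B) * ((1 - P) * N) := by
    have : (1 - M * B) * ((1 - P) * N) = N - M * B * N - P * N + M * B * P * N := by
      noncomm_ring
    rw [this, hMBN, hMBP]; simp
  have hPg : P * (1 - B * M) = 0 := by rw [mul_sub, mul_one, ← mul_assoc, hPBM, sub_self]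
  rw [← hN]
  -- pass to operators
  obtain ⟨T, hT⟩ : ∃ T : Matrix (Fin n) (Fin n) ℝ ≃⋆ₐ[ℝ]
      (EuclideanSpace ℝ (Fin n) →L[ℝ] EuclideanSpace ℝ (Fin n)),
      T = Matrix.toEuclideanCLM (𝕜 := ℝ) := ⟨_, rfl⟩
  have Tmul : ∀ X Y v, T (X * Y) v = T X (T Y v) := fun X Y v => by rw [map_mul]; rfl
  have hsymA := aux_inner_symm hA.1
  have hsymP := aux_inner_symm hPh
  have hquadA := aux_quad hA.1
  have hquadB := aux_quad hB.1
  have heigA := aux_eig hA.1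
  have hcoefB := aux_coef hB.1
  simp only [← hT] at hsymA hsymP hquadA hquadB heigA hcoefB
  have Tz : ∀ v, T 0 v = 0 := fun v => by rw [map_zero]; rfl
  -- bounds
  have hBnorm : ∀ v, ‖T B v‖ ≤ Λ * ‖v‖ := by
    intro v
    refine (sq_le_sq₀ (norm_nonneg _) (by positivity)).mp ?_
    rw [mul_pow, aux_normsq hB.1, aux_normsq hB.1, Finset.mul_sum]
    refine Finset.sum_le_sum fun i _ => ?_
    rw [hcoefB, mul_pow]
    have := hB.eigenvalues_pos i
    have := hΛ_max i
    gcongr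
  have hBquad : ∀ v, β * ‖v‖ ^ 2 ≤ inner ℝ v (T B v) := by
    intro v
    rw [hquadB, aux_normsq hB.1, Finset.mul_sum]
    refine Finset.sum_le_sum fun i _ => ?_
    have := hβ_min i
    gcongr
  have hBnn : ∀ v, 0 ≤ inner ℝ v (T B v) := fun v => le_trans (by positivity) (hBquad v)
  have hAquad : ∀ v, T P v = 0 → α * ‖v‖ ^ 2 ≤ inner ℝ v (T A v) := by
    intro v hv
    rw [hquadA, aux_normsq hA.1, Finset.mul_sum]
    refine Finset.sum_le_sum fun i _ => ?_
    by_cases h0 : hA.1.eigenvalues i = 0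
    · have hk : A *ᵥ (hA.1.eigenvectorBasis i).ofLp = 0 := by
        rw [hA.1.mulVec_eigenvectorBasis, h0, zero_smul]
      have hp : T P (hA.1.eigenvectorBasis i) = hA.1.eigenvectorBasis i := by
        ext j
        rw [hT]
        simpa using congrFun (hP_ker' _ hk) j
      have : inner ℝ (hA.1.eigenvectorBasis i) v = 0 := by
        rw [← hp, hsymP, hv, inner_zero_right]
      rw [this]; simp
    · have := hα_min i h0
      gcongr
  have hMnorm : ∀ v, ‖T M v‖ ≤ ‖v‖ / β := by
    intro v
    rw [le_div_iff₀ hβ]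
    have h1 := hBquad (T M v)
    have h2 : inner ℝ (T M v) (T B (T M v)) = inner ℝ (T M v) v := by
      conv_lhs => rw [← hPM]
      rw [Tmul, hsymP, ← Tmul, ← Tmul, ← Tmul, hCM, ← hsymP, ← Tmul, hPM]
    rw [h2] at h1
    have h3 := real_inner_le_norm (T M v) v
    by_cases hz : ‖T M v‖ = 0
    · rw [hz]; simp
    · have hpos : 0 < ‖T M v‖ := lt_of_le_of_ne (norm_nonneg _) (Ne.symm hz)
      nlinarith
  have hg : ∀ v, ‖T (1 - B * M) v‖ ≤ (1 + Λ / β) * ‖v‖ := by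
    intro v
    have e : T (1 - B * M) v = v - T B (T M v) := by
      rw [map_sub, map_one, ← Tmul]; rfl
    rw [e]
    calc ‖v - T B (T M v)‖ ≤ ‖v‖ + ‖T B (T M v)‖ := norm_sub_le _ _
      _ ≤ ‖v‖ + Λ * (‖v‖ / β) := by
        gcongr
        exact (hBnorm _).trans (by gcongr; exact hMnorm v)
      _ = _ := by ring
  have hg' : ∀ v, ‖T (1 - M * B) v‖ ≤ (1 + Λ / β) * ‖v‖ := by
    intro v
    have e : T (1 - M * B) v = v - T M (T B v) := by
      rw [map_sub, map_one, ← Tmul]; rfl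
    rw [e]
    calc ‖v - T M (T B v)‖ ≤ ‖v‖ + ‖T M (T B v)‖ := norm_sub_le _ _
      _ ≤ ‖v‖ + (Λ * ‖v‖) / β := by
        gcongr
        exact (hMnorm _).trans (by gcongr; exact hBnorm v)
      _ = _ := by ring
  have hQN : ∀ f, ‖T ((1 - P) * N) f‖ ≤ ‖T (1 - B * M) f‖ / α := by
    intro f
    rw [le_div_iff₀ hα_pos]
    obtain ⟨q, hq⟩ : ∃ q, q = T ((1 - P) * N) f := ⟨_, rfl⟩
    obtain ⟨g, hgg⟩ : ∃ g, g = T (1 - B * M) f := ⟨_, rfl⟩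
    obtain ⟨e, he⟩ : ∃ e, e = T N f := ⟨_, rfl⟩
    have hPq : T P q = 0 := by
      rw [hq, ← Tmul, ← mul_assoc, mul_sub, mul_one, hP_idem, sub_self, zero_mul, Tz]
    have hqe : q = e - T P e := by
      rw [hq, he, sub_mul, one_mul, map_sub, ← Tmul]; rfl
    have hPg' : T P g = 0 := by rw [hgg, ← Tmul, hPg, Tz]
    have hAe : T A q = T A e := by
      rw [hqe, map_sub, ← Tmul, hAP, Tz, sub_zero]
    have hSe : T A e + t • T B e = g := by
      rw [hgg, ← hSN, Tmul, he, map_add, map_smul]; rfl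
    have h1 : inner ℝ q (T A q) = inner ℝ e (T A e) := by
      rw [hAe, hqe, inner_sub_left, hsymP, ← Tmul, hPA, Tz, inner_zero_right, sub_zero]
    have h2 : inner ℝ e g = inner ℝ q g := by
      rw [hqe, inner_sub_left, hsymP, hPg', inner_zero_right, sub_zero]
    have h3 : inner ℝ e g = inner ℝ e (T A e) + t * inner ℝ e (T B e) := by
      rw [← hSe, inner_add_right, real_inner_smul_right]
    have h4 := hAquad q hPq
    have h5 := mul_nonneg ht.le (hBnn e)
    have h6 := real_inner_le_norm q g
    rw [← hq, ← hgg]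
    by_cases hz : ‖q‖ = 0
    · rw [hz]; simp
    · have hpos : 0 < ‖q‖ := lt_of_le_of_ne (norm_nonneg _) (Ne.symm hz)
      nlinarith
  unfold specNorm5
  rw [← hT]
  refine ContinuousLinearMap.opNorm_le_bound _ (by positivity) fun f => ?_
  rw [hNQ, Tmul]
  calc _ ≤ (1 + Λ / β) * ‖T ((1 - P) * N) f‖ := hg' _
    _ ≤ (1 + Λ / β) * (((1 + Λ / β) * ‖f‖) / α) := by
      gcongr
      exact (hQN f).trans (by gcongr; exact hg f)
    _ = _ := by ring
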